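/- Let P be a finite poset with d = dim k[O(P)]. If the Stanley-Reisner ring k[O(P)] satisfies Serre's condition (S_ℓ), then the reduced homology H̃_{i−1}(O(P_{>j}); k) vanishes whenever i + j < d and 0 ≤ i < ℓ. In particular, if Δ is a simplicial complex satisfying (S_ℓ), then H̃_{i−1}([Δ]_{>j}; k) = 0 whenever i + j < d and 0 ≤ i < ℓ. -/

import Mathlib

open Finset

/-- An abstract simplicial complex on vertex type `V`, given by a finite, downward closed
family of finite subsets of `V` (its faces). -/
structure SComplex (V : Type) [DecidableEq V] where
  faces : Finset (Finset V)
  down_closed : ∀ ⦃s t : Finset V⦄, s ∈ faces → t ⊆ s → t ∈ faces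

namespace SComplex

variable {V : Type} [DecidableEq V]

/-- `K.rank = d = dim k[Δ] = dim Δ + 1` is the maximal cardinality of a face of `K`. -/
def rank (K : SComplex V) : ℕ := K.faces.sup Finset.card

/-- `F` is a facet (maximal face) of `K`. -/
def IsFacet (K : SComplex V) (F : Finset V) : Prop :=
  F ∈ K.faces ∧ ∀ G ∈ K.faces, F ⊆ G → F = G

/-- `K` is pure: all facets have the maximal cardinality `K.rank`. -/
def Pure (K : SComplex V) : Prop := ∀ F : Finset V, K.IsFacet F → F.card = K.rank

/-- The link `lk_K(T) = {G ∈ K | T ∪ G ∈ K, T ∩ G = ∅}`. -/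
def link (K : SComplex V) (T : Finset V) : SComplex V where
  faces := K.faces.filter fun G => Disjoint T G ∧ T ∪ G ∈ K.faces
  down_closed := by
    intro s t hs hts
    simp only [Finset.mem_filter] at hs ⊢
    exact ⟨K.down_closed hs.1 hts, hs.2.1.mono_right hts,
      K.down_closed hs.2.2 (Finset.union_subset_union_right hts)⟩

/-- The anti-star `ast_K(T) = {G ∈ K | T ∩ G = ∅}`. -/
def antistar (K : SComplex V) (T : Finset V) : SComplex V where
  faces := K.faces.filter fun G => Disjoint T G
  down_closed := by
    intro s t hs hts
    simp only [Finset.mem_filter] at hs ⊢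
    exact ⟨K.down_closed hs.1 hts, hs.2.mono_right hts⟩

/-- The induced subcomplex of `K` on a set `W` of vertices. -/
def restrict (K : SComplex V) (W : Finset V) : SComplex V where
  faces := K.faces.filter fun G => G ⊆ W
  down_closed := by
    intro s t hs hts
    simp only [Finset.mem_filter] at hs ⊢
    exact ⟨K.down_closed hs.1 hts, hts.trans hs.2⟩

/-- The subcomplex of faces of cardinality at most `m`; as cardinality = dimension + 1, this is
the `(m-1)`-skeleton `Δ^{(m-1)}`. -/
def skelCard (K : SComplex V) (m : ℕ) : SComplex V where
  faces := K.faces.filter fun G => G.card ≤ m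
  down_closed := by
    intro s t hs hts
    simp only [Finset.mem_filter] at hs ⊢
    exact ⟨K.down_closed hs.1 hts, le_trans (Finset.card_le_card hts) hs.2⟩

/-- `K.trunc j` is `[Δ]_{>j}`, the order complex of the poset of faces of `K` of cardinality
(equivalently, of height in the face poset) `> j`: its faces are the chains of such faces.
For `j = 0` this is the barycentric subdivision of `K`. -/
def trunc (K : SComplex V) (j : ℕ) : SComplex (Finset V) where
  faces := K.faces.powerset.filter fun C =>
    (∀ s ∈ C, j < s.card) ∧ ∀ s ∈ C, ∀ t ∈ C, s ⊆ t ∨ t ⊆ s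
  down_closed := by
    intro s t hs hts
    simp only [Finset.mem_powerset, Finset.mem_filter] at hs ⊢
    exact ⟨hts.trans hs.1, fun a ha => hs.2.1 a (hts ha),
      fun a ha b hb => hs.2.2 a (hts ha) b (hts hb)⟩

/-- `Δ_A`: the complex obtained from `K` by deleting all faces containing a member of `A`. -/
def deleteAbove (K : SComplex V) (A : Finset (Finset V)) : SComplex V where
  faces := K.faces.filter fun s => ∀ τ ∈ A, ¬ τ ⊆ s
  down_closed := by
    intro s t hs hts
    simp only [Finset.mem_filter] at hs ⊢
    exact ⟨K.down_closed hs.1 hts, fun τ hτ hsub => hs.2 τ hτ (hsub.trans hts)⟩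

/-- The number of faces of `K` of cardinality `i`, i.e. the face number `f_{i-1}(K)`. -/
def faceCount (K : SComplex V) (i : ℕ) : ℕ := (K.faces.filter fun s => s.card = i).card

/-- The Euler characteristic `χ(K) = Σ_{i ≥ 0} (-1)^i f_i(K)`. -/
def eulerChar (K : SComplex V) : ℤ :=
  ∑ s ∈ K.faces.filter (fun s => s ≠ ∅), (-1 : ℤ) ^ (s.card - 1)

/-- The reduced Euler characteristic `χ̃(K) = χ(K) - 1`. -/
def reducedEulerChar (K : SComplex V) : ℤ := eulerChar K - 1

end SComplex

/-! ### Simplicial homology with coefficients in a field `k` -/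

/-- An arbitrary linear order on a finite type. -/
noncomputable def arbOrder (V : Type) [Fintype V] : LinearOrder V :=
  LinearOrder.lift' (Fintype.equivFin V) (Equiv.injective _)

namespace SComplex

variable {V : Type} [DecidableEq V]

/-- The faces of `K` of cardinality `n`, as a type. -/
def Faces (K : SComplex V) (n : ℕ) : Type :=
  {s : Finset V // s ∈ K.faces ∧ s.card = n}

/-- The space of reduced simplicial `n`-chains of `K`: formal `k`-linear combinations of the
faces of cardinality `n` (such a face has dimension `n - 1`; the empty face sits in degree `0`,
which produces *reduced* homology). -/
abbrev ChainsOf (k : Type) [Field k] (K : SComplex V) (n : ℕ) : Type := Faces K n →₀ k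

variable (k : Type) [Field k] [Fintype V]

/-- The simplicial boundary map, with signs determined by an arbitrary but fixed linear order
on the vertices. -/
noncomputable def bd (K : SComplex V) (n : ℕ) :
    ChainsOf k K n →ₗ[k] ChainsOf k K (n - 1) :=
  letI : LinearOrder V := arbOrder V
  Finsupp.lsum k fun s : Faces K n =>
    LinearMap.toSpanSingleton k (ChainsOf k K (n - 1))
      (∑ x ∈ s.1.attach,
        ((-1 : k) ^ (s.1.filter (fun y => y < x.1)).card) •
          Finsupp.single
            (⟨s.1.erase x.1,
              K.down_closed s.2.1 (Finset.erase_subset _ _),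
              by rw [Finset.card_erase_of_mem x.2, s.2.2]⟩ : Faces K (n - 1))
            (1 : k))

/-- `HVanish k K i` says that the reduced simplicial homology `H̃_{i-1}(K; k)` vanishes.
Note the indexing convention: the index `i` is the *cardinality* of the relevant faces, so this
is reduced homology in topological degree `i - 1`; e.g. `HVanish k K 1` says `H̃₀(K; k) = 0`
(`K` is connected and nonempty) and `HVanish k K 0` says `H̃₋₁(K; k) = 0` (`K` has a face).
Since the cycles in degree `i - 1` are `ker ∂ᵢ` and the boundaries are `im ∂ᵢ₊₁`, and the
boundaries are always contained in the cycles, vanishing of homology says exactly that every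
cycle is a boundary. -/
def HVanish (K : SComplex V) (i : ℕ) : Prop :=
  LinearMap.ker (bd k K i) ≤ LinearMap.range (bd k K (i + 1))

/-- `redHomologyRank k K i` is the dimension `dim_k H̃_{i-1}(K; k)` of the reduced simplicial
homology of `K` in topological degree `i - 1` (cardinality index `i`), namely the dimension of
the cycles `ker ∂ᵢ` modulo the boundaries `im ∂ᵢ₊₁`. -/
noncomputable def redHomologyRank (K : SComplex V) (i : ℕ) : ℕ :=
  Module.finrank k ↥(LinearMap.ker (bd k K i)) -
    Module.finrank k ↥(LinearMap.range (bd k K (i + 1)) ⊓ LinearMap.ker (bd k K i))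

end SComplex

/-! ### Depth, Serre conditions, and Stanley–Reisner rings -/

/-- The length of a longest regular sequence on `R` contained in the ideal `I`
(the `I`-depth of `R`). -/
noncomputable def depthIn (R : Type) [CommRing R] (I : Ideal R) : ℕ :=
  sSup {n : ℕ | ∃ rs : List R, rs.length = n ∧ (∀ r ∈ rs, r ∈ I) ∧
    RingTheory.Sequence.IsRegular R rs}

/-- Serre's condition `(S_ℓ)` for a commutative ring:
`depth R_p ≥ min {ℓ, dim R_p}` for every prime `p`. -/
def SerreCondS (ℓ : ℕ) (R : Type) [CommRing R] : Prop :=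
  ∀ (p : Ideal R) (hp : p.IsPrime),
    haveI := hp
    min ((ℓ : ℕ∞) : WithBot ℕ∞) (ringKrullDim (Localization.AtPrime p)) ≤
      ((depthIn (Localization.AtPrime p)
        (IsLocalRing.maximalIdeal (Localization.AtPrime p)) : ℕ∞) : WithBot ℕ∞)

namespace SComplex

variable {V : Type} [DecidableEq V] (k : Type) [Field k]

/-- The Stanley–Reisner ideal of `K`: generated by the squarefree monomials supported on
non-faces. -/
noncomputable def srIdeal (K : SComplex V) : Ideal (MvPolynomial V k) :=
  Ideal.span ((fun s : Finset V => ∏ v ∈ s, MvPolynomial.X v) '' {s : Finset V | s ∉ K.faces})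

/-- The Stanley–Reisner ring `k[Δ]`. -/
noncomputable abbrev SRRing (K : SComplex V) : Type := MvPolynomial V k ⧸ srIdeal k K

/-- `depth k[Δ]`: the depth of the Stanley–Reisner ring with respect to its irrelevant
(graded maximal) ideal. -/
noncomputable def srDepth (K : SComplex V) : ℕ :=
  depthIn (SRRing k K)
    (Ideal.span (Set.range fun v : V => Ideal.Quotient.mk (srIdeal k K) (MvPolynomial.X v)))

/-- `k[Δ]` satisfies Serre's condition `(S_ℓ)`. -/
def SerreS (ℓ : ℕ) (K : SComplex V) : Prop := SerreCondS ℓ (SRRing k K)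

end SComplex

/-! ### Order complexes of finite posets -/

/-- The order complex `O(P)` of a finite poset: its faces are the chains of `P`. -/
def orderComplex (P : Type) [DecidableEq P] [Fintype P] [PartialOrder P]
    [∀ a b : P, Decidable (a ≤ b)] : SComplex P where
  faces := Finset.univ.filter fun C : Finset P => ∀ a ∈ C, ∀ b ∈ C, a ≤ b ∨ b ≤ a
  down_closed := by
    intro s t hs hts
    simp only [Finset.mem_filter, Finset.mem_univ, true_and] at hs ⊢
    exact fun a ha b hb => hs a (hts ha) b (hts hb)

/-- The height of an element of a finite poset: the maximal cardinality of a chain with top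
element `p` (so minimal elements have height `1`). -/
def pheight {P : Type} [DecidableEq P] [Fintype P] [PartialOrder P]
    [∀ a b : P, Decidable (a ≤ b)] (p : P) : ℕ :=
  Finset.sup (Finset.univ.filter fun C : Finset P =>
    p ∈ C ∧ (∀ a ∈ C, a ≤ p) ∧ ∀ a ∈ C, ∀ b ∈ C, a ≤ b ∨ b ≤ a) Finset.card

/-- The height `ht P` of a finite poset: the maximal cardinality of a chain. -/
def pheightMax (P : Type) [DecidableEq P] [Fintype P] [PartialOrder P]
    [∀ a b : P, Decidable (a ≤ b)] : ℕ :=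
  Finset.univ.sup (pheight (P := P))

/-- `O(P_{>j})`: the full subcomplex of the order complex on the elements of height `> j`. -/
def ocAbove (P : Type) [DecidableEq P] [Fintype P] [PartialOrder P]
    [∀ a b : P, Decidable (a ≤ b)] (j : ℕ) : SComplex P :=
  (orderComplex P).restrict (Finset.univ.filter fun p => j < pheight p)

/-- The face poset `F(Δ)` of a simplicial complex: the nonempty faces, ordered by inclusion. -/
abbrev SComplex.FacePoset {V : Type} [DecidableEq V] (K : SComplex V) : Type :=
  {s : Finset V // s ∈ K.faces ∧ s ≠ ∅}

instance {V : Type} [DecidableEq V] (K : SComplex V) :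
    ∀ a b : K.FacePoset, Decidable (a ≤ b) := fun a b =>
  decidable_of_iff (a.1 ≤ b.1) Subtype.coe_le_coe

/-! ### Koszul cochains -/

namespace Koszul

variable {V : Type*}

/-- The sign of `v` in `S`, relative to the vertex numbering `e`. -/
def sgn (e : V → ℕ) (v : V) (S : Finset V) : ℤ := (-1) ^ (S.filter fun y => e y < e v).card

lemma sgn_mul_self (e : V → ℕ) (v : V) (S : Finset V) : sgn e v S * sgn e v S = 1 := by
  unfold sgn
  rw [← mul_pow]; simp

variable [DecidableEq V]

lemma sgn_insert_of_notMem (e : V → ℕ) (v : V) {w : V} {S : Finset V} (hw : w ∉ S) :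
    sgn e v (insert w S) = (if e w < e v then -1 else 1) * sgn e v S := by
  unfold sgn
  rw [Finset.filter_insert]
  split_ifs with h
  · rw [Finset.card_insert_of_notMem (by simp [hw]), pow_succ]; ring
  · simp

lemma sgn_insert_self (e : V → ℕ) (v : V) (S : Finset V) :
    sgn e v (insert v S) = sgn e v S := by
  unfold sgn
  rw [Finset.filter_insert, if_neg (lt_irrefl _)]

lemma sgn_erase_self (e : V → ℕ) (v : V) (S : Finset V) :
    sgn e v (S.erase v) = sgn e v S := by
  by_cases h : v ∈ S
  · conv_rhs => rw [← Finset.insert_erase h, sgn_insert_self]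
  · rw [Finset.erase_eq_of_notMem h]

lemma sgn_mul_sgn_insert {e : V → ℕ} (he : Function.Injective e) {v w : V} {S : Finset V}
    (hvw : v ≠ w) (hv : v ∉ S) (hw : w ∉ S) :
    sgn e v (insert w S) * sgn e w S = -(sgn e w (insert v S) * sgn e v S) := by
  rw [sgn_insert_of_notMem e v hw, sgn_insert_of_notMem e w hv]
  rcases lt_or_gt_of_ne (fun h => hvw (he h)) with h | h
  · rw [if_neg (not_lt.2 h.le), if_pos h]; ring
  · rw [if_neg (not_lt.2 h.le), if_pos h]; ring

lemma sgn_mul_sgn_erase {e : V → ℕ} (he : Function.Injective e) {v w : V} {S : Finset V}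
    (hvw : v ≠ w) (hv : v ∈ S) (hw : w ∈ S) :
    sgn e v S * sgn e w (S.erase v) = -(sgn e w S * sgn e v (S.erase w)) := by
  have h1 : v ∉ (S.erase v).erase w := by simp
  have h2 : w ∉ (S.erase v).erase w := by simp
  have h3 : insert w ((S.erase v).erase w) = S.erase v :=
    Finset.insert_erase (Finset.mem_erase.2 ⟨hvw.symm, hw⟩)
  have h4 : insert v ((S.erase v).erase w) = S.erase w := by
    rw [Finset.erase_right_comm]; exact Finset.insert_erase (Finset.mem_erase.2 ⟨hvw, hv⟩)
  have := sgn_mul_sgn_insert he hvw h1 h2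
  rw [h3, h4, sgn_erase_self, ← sgn_insert_self e w, ← sgn_insert_self e v ((S.erase v).erase w),
    h3, h4, sgn_erase_self] at this
  exact this

variable {A M : Type*} [CommRing A] [AddCommGroup M] [Module A M]

/-- The Koszul differential of the sequence `y` on `M`-valued cochains. With `y = 1` it is the
simplicial coboundary. -/
def cobd (e : V → ℕ) (y : V → A) (c : Finset V → M) (T : Finset V) : M :=
  ∑ v ∈ T, sgn e v T • y v • c (T.erase v)

/-- Contraction with the basis vector of `w`. -/
def contract (e : V → ℕ) (w : V) (c : Finset V → M) (S : Finset V) : M :=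
  if w ∈ S then 0 else sgn e w S • c (insert w S)

/-- Exterior multiplication by the basis vector of `w`. -/
def wedge (e : V → ℕ) (w : V) (c : Finset V → M) (S : Finset V) : M :=
  if w ∈ S then sgn e w S • c (S.erase w) else 0

lemma cobd_add (e : V → ℕ) (y : V → A) (c d : Finset V → M) (T : Finset V) :
    cobd e y (c + d) T = cobd e y c T + cobd e y d T := by
  simp [cobd, Finset.sum_add_distrib]

lemma cobd_sub (e : V → ℕ) (y : V → A) (c d : Finset V → M) (T : Finset V) :
    cobd e y (c - d) T = cobd e y c T - cobd e y d T := by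
  simp [cobd, Finset.sum_sub_distrib, smul_sub]

lemma cobd_smul (e : V → ℕ) (y : V → A) (a : A) (c : Finset V → M) (T : Finset V) :
    cobd e y (a • c) T = a • cobd e y c T := by
  simp only [cobd, Finset.smul_sum, Pi.smul_apply]
  refine Finset.sum_congr rfl fun v _ => ?_
  rw [smul_comm a (sgn e v T), smul_comm a (y v)]

lemma cobd_congr (e : V → ℕ) (y : V → A) {c d : Finset V → M} {T : Finset V}
    (h : ∀ v ∈ T, c (T.erase v) = d (T.erase v)) : cobd e y c T = cobd e y d T :=
  Finset.sum_congr rfl fun v hv => by rw [h v hv]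

lemma cobd_map {N : Type*} [AddCommGroup N] [Module A N] (e : V → ℕ) (y : V → A)
    (f : M →ₗ[A] N) (c : Finset V → M) (T : Finset V) :
    cobd e y (fun S => f (c S)) T = f (cobd e y c T) := by
  simp [cobd, map_sum]

lemma cobd_cobd {e : V → ℕ} (he : Function.Injective e) (y : V → A) (c : Finset V → M)
    (T : Finset V) : cobd e y (cobd e y c) T = 0 := by
  simp only [cobd, Finset.smul_sum]
  rw [Finset.sum_sigma']
  refine Finset.sum_involution (fun p _ => ⟨p.2, p.1⟩) ?_ ?_ ?_ ?_
  · rintro ⟨v, w⟩ h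
    simp only [Finset.mem_sigma, Finset.mem_erase] at h
    obtain ⟨hv, hwv, hw⟩ := h
    have := sgn_mul_sgn_erase he (Ne.symm hwv) hv hw
    simp only
    rw [Finset.erase_right_comm, smul_comm (y v) (sgn e w (T.erase v)),
      smul_comm (y w) (sgn e v (T.erase w)), smul_comm (y w) (y v), smul_smul,
      smul_smul (sgn e w T), this, neg_smul, neg_add_cancel]
  · rintro ⟨v, w⟩ h _ h'
    simp only [Finset.mem_sigma, Finset.mem_erase] at h
    exact h.2.1 (congrArg Sigma.fst h')
  · rintro ⟨v, w⟩ h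
    simp only [Finset.mem_sigma, Finset.mem_erase] at h ⊢
    exact ⟨h.2.2, Ne.symm h.2.1, h.1⟩
  · rintro ⟨v, w⟩ _
    rfl

lemma cobd_contract_add {e : V → ℕ} (he : Function.Injective e) (y : V → A) (w : V)
    (c : Finset V → M) (S : Finset V) :
    cobd e y (contract e w c) S + contract e w (cobd e y c) S = y w • c S := by
  by_cases hw : w ∈ S
  · have h1 : contract e w (cobd e y c) S = 0 := if_pos hw
    rw [h1, add_zero, cobd, Finset.sum_eq_single w]
    · rw [contract, if_neg (by simp), Finset.insert_erase hw, sgn_erase_self,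
        smul_comm (y w), smul_smul, sgn_mul_self, one_smul]
    · intro v _ hvw
      rw [contract, if_pos (by simp [hw, Ne.symm hvw])]; simp
    · exact fun h => absurd hw h
  · rw [contract, if_neg hw, cobd, cobd, Finset.sum_insert hw, smul_add, smul_smul, sgn_insert_self,
      sgn_mul_self, one_smul, Finset.erase_insert hw, add_left_comm, Finset.smul_sum,
      ← Finset.sum_add_distrib]
    convert add_zero _
    refine Finset.sum_eq_zero fun v hv => ?_
    have hvw : v ≠ w := fun h => hw (h ▸ hv)
    have hw' : w ∉ S.erase v := by simp [hw]
    rw [contract, if_neg hw', Finset.erase_insert_of_ne hvw.symm, smul_comm (y v), smul_smul,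
      smul_smul]
    have := sgn_mul_sgn_insert he hvw (Finset.notMem_erase v S) hw'
    rw [Finset.insert_erase hv, sgn_erase_self] at this
    have h2 := sgn_insert_of_notMem e v hw'
    rw [sgn_erase_self, ← sgn_insert_of_notMem e v hw] at h2
    rw [← add_smul, ← h2]
    convert zero_smul ℤ _
    linear_combination (sgn e w (S.erase v) * sgn e w S) * this
      - (sgn e v (insert w (S.erase v)) * sgn e w S) * sgn_mul_self e w (S.erase v)
      - (sgn e v S * sgn e w (S.erase v)) * sgn_mul_self e w S

lemma cobd_wedge {e : V → ℕ} (he : Function.Injective e) (y : V → A) (w : V) (c : Finset V → M)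
    (S : Finset V) : cobd e y (wedge e w c) S = -wedge e w (cobd e y c) S := by
  by_cases hw : w ∈ S
  · rw [cobd, wedge, if_pos hw, ← Finset.add_sum_erase _ _ hw, wedge, if_neg (by simp), cobd,
      Finset.smul_sum, ← Finset.sum_neg_distrib]
    simp only [smul_zero, zero_add]
    refine Finset.sum_congr rfl fun v hv => ?_
    obtain ⟨hvw, hv⟩ := Finset.mem_erase.1 hv
    rw [wedge, if_pos (by simp [hw, Ne.symm hvw]), smul_comm (y v), smul_smul, smul_smul,
      sgn_mul_sgn_erase he hvw hv hw, neg_smul, Finset.erase_right_comm]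
  · rw [wedge, if_neg hw, neg_zero, cobd]
    refine Finset.sum_eq_zero fun v _ => ?_
    rw [wedge, if_neg (by simp [hw])]; simp

lemma wedge_contract (e : V → ℕ) {w : V} (c : Finset V → M) {S : Finset V} (hw : w ∈ S) :
    wedge e w (contract e w c) S = c S := by
  rw [wedge, if_pos hw, contract, if_neg (by simp), Finset.insert_erase hw, sgn_erase_self,
    smul_smul, sgn_mul_self, one_smul]

/-- Every cochain of cardinality `i` on `L` that is a cocycle on `L` is a coboundary on `L`. -/
def IsExact (e : V → ℕ) (y : V → A) (M : Type*) [AddCommGroup M] [Module A M]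
    (L : Finset V → Prop) (i : ℕ) : Prop :=
  ∀ c : Finset V → M, (∀ T, L T → T.card = i + 1 → cobd e y c T = 0) →
    ∃ b : Finset V → M, ∀ S, L S → S.card = i → c S = cobd e y b S

lemma isExact_congr {e : V → ℕ} {y : V → A} {L L' : Finset V → Prop} (h : ∀ S, L S ↔ L' S) {i : ℕ}
    (hL : IsExact e y M L i) : IsExact e y M L' i := by
  rwa [← funext fun S => propext (h S)]

lemma isExact_of_cone {e : V → ℕ} (he : Function.Injective e) {L : Finset V → Prop} (p : V)
    (hp : ∀ S, L S → L (insert p S)) (i : ℕ) : IsExact e (1 : V → A) M L i := by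
  intro c hc
  refine ⟨contract e p c, fun S hS hi => ?_⟩
  have h := cobd_contract_add he (1 : V → A) p c S
  rw [Pi.one_apply, one_smul] at h
  rw [← h, contract]
  split_ifs with hpS
  · rw [add_zero]
  · rw [hc _ (hp S hS) (by rw [Finset.card_insert_of_notMem hpS, hi]), smul_zero, add_zero]

lemma isExact_deletion {e : V → ℕ} (he : Function.Injective e) {L : Finset V → Prop}
    (hL : ∀ S T, L S → T ⊆ S → L T) (p : V) {i : ℕ} (h : IsExact e (1 : V → A) M L i)
    (hlk : IsExact e (1 : V → A) M (fun S => p ∉ S ∧ L (insert p S)) i) :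
    IsExact e (1 : V → A) M (fun S => p ∉ S ∧ L S) i := by
  intro c hc
  obtain ⟨b, hb⟩ := hlk c fun T hT => hc T ⟨hT.1, hL _ _ hT.2 (Finset.subset_insert _ _)⟩
  set c' : Finset V → M := fun S => if p ∈ S then 0 else c S with hc'
  obtain ⟨d, hd⟩ := h (c' + wedge e p b) fun T hT hi => by
    rw [cobd_add, cobd_wedge he, wedge]
    split_ifs with hp
    · rw [← hb (T.erase p) ⟨by simp, by rwa [Finset.insert_erase hp]⟩
        (by rw [Finset.card_erase_of_mem hp, hi]; rfl), cobd, Finset.sum_eq_single p]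
      · simp [hc']
      · intro v _ hvp
        simp [hc', hp, Ne.symm hvp]
      · exact fun h => absurd hp h
    · rw [neg_zero, add_zero, cobd_congr e _ (d := c) fun v _ => by simp [hc', hp]]
      exact hc T ⟨hp, hT⟩ hi
  refine ⟨d, fun S hS hi => ?_⟩
  rw [← hd S hS.2 hi]
  simp [hc', wedge, hS.1]

lemma isExact_of_deletion {e : V → ℕ} (he : Function.Injective e) {L : Finset V → Prop}
    (hL : ∀ S T, L S → T ⊆ S → L T) (p : V) {i : ℕ}
    (h : IsExact e (1 : V → A) M (fun S => p ∉ S ∧ L S) i)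
    (hlk : ∀ j, i = j + 1 → IsExact e (1 : V → A) M (fun S => p ∉ S ∧ L (insert p S)) j) :
    IsExact e (1 : V → A) M L i := by
  intro c hc
  obtain ⟨d, hd⟩ := h c fun T hT => hc T hT.2
  rcases i with _ | j
  · refine ⟨d, fun S hS hi => hd S ⟨?_, hS⟩ hi⟩
    rw [Finset.card_eq_zero.1 hi]; simp
  obtain ⟨q, hq⟩ := hlk j rfl (contract e p (c - cobd e (1 : V → A) d)) fun T hT hi => by
    have h1 := cobd_contract_add he (1 : V → A) p (c - cobd e (1 : V → A) d) T
    have h2 : contract e p (cobd e (1 : V → A) (c - cobd e (1 : V → A) d)) T = 0 := by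
      rw [contract, if_neg hT.1, cobd_sub, cobd_cobd he, sub_zero, hc _ hT.2, smul_zero]
      rw [Finset.card_insert_of_notMem hT.1, hi]
    rw [h2, add_zero] at h1
    rw [h1, Pi.sub_apply, hd T ⟨hT.1, hL _ _ hT.2 (Finset.subset_insert _ _)⟩ hi, sub_self,
      smul_zero]
  refine ⟨d - wedge e p q, fun S hS hi => ?_⟩
  rw [cobd_sub, cobd_wedge he, sub_neg_eq_add]
  by_cases hp : p ∈ S
  · have h1 := wedge_contract e (c - cobd e (1 : V → A) d) hp
    rw [wedge, if_pos hp, hq (S.erase p) ⟨by simp, by rwa [Finset.insert_erase hp]⟩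
      (by rw [Finset.card_erase_of_mem hp, hi]; rfl)] at h1
    rw [wedge, if_pos hp, h1]; simp
  · rw [wedge, if_neg hp, add_zero, hd S ⟨hp, hS⟩ hi]

section Transfer

variable {W : Type*} [DecidableEq W]

lemma cobd_comp_map {e : V → ℕ} {f : W → ℕ} (φ : V ↪ W)
    (hφ : ∀ a b, f (φ a) < f (φ b) ↔ e a < e b) (c : Finset W → M) (T : Finset V) :
    cobd f (1 : W → A) c (T.map φ) = cobd e (1 : V → A) (fun S => c (S.map φ)) T := by
  simp only [cobd, Finset.sum_map, Finset.map_erase, Pi.one_apply]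
  refine Finset.sum_congr rfl fun v _ => ?_
  congr 1
  unfold sgn
  rw [Finset.filter_map, Finset.card_map]
  simp [hφ]

lemma isExact_map_iff {e : V → ℕ} {f : W → ℕ} (φ : V ↪ W)
    (hφ : ∀ a b, f (φ a) < f (φ b) ↔ e a < e b) {L : Finset W → Prop}
    (hL : ∀ S, L S → ∃ T : Finset V, S = T.map φ) (i : ℕ) :
    IsExact f (1 : W → A) M L i ↔ IsExact e (1 : V → A) M (fun S => L (S.map φ)) i := by
  have hinj : Function.Injective (Finset.map φ) := Finset.map_injective φ
  constructor
  · intro h c hc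
    have hext : ∀ S : Finset V, Function.extend (Finset.map φ) c 0 (S.map φ) = c S :=
      fun S => hinj.extend_apply c 0 S
    obtain ⟨b, hb⟩ := h (Function.extend (Finset.map φ) c 0) fun T hT hi => by
      obtain ⟨T, rfl⟩ := hL T hT
      rw [cobd_comp_map φ hφ]
      simp only [hext]
      exact hc T hT (by simpa using hi)
    refine ⟨fun S => b (S.map φ), fun S hS hi => ?_⟩
    rw [← cobd_comp_map φ hφ, ← hb _ hS (by simpa using hi), hext]
  · intro h c hc
    obtain ⟨b, hb⟩ := h (fun S => c (S.map φ)) fun T hT hi => by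
      rw [← cobd_comp_map φ hφ]
      exact hc _ hT (by simpa using hi)
    have hext : ∀ S : Finset V, Function.extend (Finset.map φ) b 0 (S.map φ) = b S :=
      fun S => hinj.extend_apply b 0 S
    refine ⟨Function.extend (Finset.map φ) b 0, fun S hS hi => ?_⟩
    obtain ⟨T, rfl⟩ := hL S hS
    rw [cobd_comp_map φ hφ]
    simp only [hext]
    exact hb T hS (by simpa using hi)

end Transfer

/-- The Koszul cohomology of `y` is annihilated by the ideal generated by `y`. -/
lemma exists_smul_eq_cobd {e : V → ℕ} (he : Function.Injective e) (y : V → A) {r : A}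
    (hr : r ∈ Ideal.span (Set.range y)) {i : ℕ} {c : Finset V → M}
    (hc : ∀ T, T.card = i + 1 → cobd e y c T = 0) :
    ∃ b : Finset V → M, ∀ S, S.card = i → r • c S = cobd e y b S := by
  induction hr using Submodule.span_induction with
  | mem r hr =>
    obtain ⟨w, rfl⟩ := hr
    refine ⟨contract e w c, fun S hi => ?_⟩
    rw [← cobd_contract_add he, contract]
    split_ifs with hw
    · rw [add_zero]
    · rw [hc _ (by rw [Finset.card_insert_of_notMem hw, hi]), smul_zero, add_zero]
  | zero => exact ⟨0, fun S _ => by simp [cobd]⟩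
  | add r s _ _ hr hs =>
    obtain ⟨b, hb⟩ := hr
    obtain ⟨d, hd⟩ := hs
    exact ⟨b + d, fun S hi => by rw [cobd_add, add_smul, hb S hi, hd S hi]⟩
  | smul a r _ hr =>
    obtain ⟨b, hb⟩ := hr
    exact ⟨a • b, fun S hi => by rw [cobd_smul, smul_assoc, hb S hi]⟩

open scoped Pointwise in
/-- The Koszul cohomology of `y` vanishes below the length of a weakly regular sequence in the ideal
generated by `y`. -/
lemma isExact_of_isWeaklyRegular {e : V → ℕ} (he : Function.Injective e) (y : V → A)
    (rs : List A) : ∀ (N : Type _) [AddCommGroup N] [Module A N] (i : ℕ),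
    (∀ r ∈ rs, r ∈ Ideal.span (Set.range y)) → RingTheory.Sequence.IsWeaklyRegular N rs →
      i < rs.length → IsExact e y N (fun _ => True) i := by
  induction rs with
  | nil => intro N _ _ i _ _ hi; simp at hi
  | cons r rs ih =>
    intro N _ _ i hmem hreg hi c hc
    rw [RingTheory.Sequence.isWeaklyRegular_cons_iff] at hreg
    obtain ⟨b, hb⟩ := exists_smul_eq_cobd he y (hmem r (by simp)) fun T hT => hc T trivial hT
    rcases i with _ | i
    · refine ⟨0, fun S _ hS => hreg.1 ?_⟩
      simp only
      rw [hb S hS, Finset.card_eq_zero.1 hS]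
      simp [cobd]
    let π : N →ₗ[A] QuotSMulTop r N := Submodule.mkQ _
    have hker : ∀ x : N, π x = 0 → ∃ z, x = r • z := fun x hx => by
      have : x ∈ r • (⊤ : Submodule A N) := by simpa [π] using hx
      obtain ⟨z, _, rfl⟩ := Submodule.mem_smul_pointwise_iff_exists _ _ _ |>.1 this
      exact ⟨z, rfl⟩
    obtain ⟨g, hg⟩ := ih (QuotSMulTop r N) i (fun s hs => hmem s (by simp [hs])) hreg.2
      (by simpa using hi) (fun S => π (b S)) fun T _ hT => by
        rw [cobd_map, ← hb T hT]
        simp only [π, Submodule.mkQ_apply, Submodule.Quotient.mk_eq_zero]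
        exact Submodule.smul_mem_pointwise_smul _ _ _ trivial
    choose g' hg' using fun S => Submodule.mkQ_surjective _ (g S)
    have : ∀ S, ∃ z, S.card = i → b S = cobd e y g' S + r • z := fun S => by
      by_cases hS : S.card = i
      · obtain ⟨z, hz⟩ := hker (b S - cobd e y g' S) (by
          rw [map_sub, ← cobd_map, hg S trivial hS]
          simp only [π, hg', sub_self])
        exact ⟨z, fun _ => by rw [← hz]; abel⟩
      · exact ⟨0, fun h => absurd h hS⟩
    choose z hz using this
    refine ⟨z, fun S _ hS => hreg.1 ?_⟩
    simp only
    rw [hb S hS, cobd_congr e y (d := cobd e y g' + r • z), cobd_add, cobd_cobd he, zero_add,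
      cobd_smul]
    intro v hv
    rw [hz _ (by rw [Finset.card_erase_of_mem hv, hS]; rfl)]
    rfl

end Koszul

/-! ### Serre's condition and links -/

namespace Koszul

variable {V : Type*} [DecidableEq V]

lemma map_cobd {R A : Type*} [CommRing R] [CommRing A] (f : R →+* A) (e : V → ℕ) (y : V → R)
    (c : Finset V → R) (T : Finset V) :
    f (cobd e y c T) = cobd e (fun v => f (y v)) (fun S => f (c S)) T := by
  simp [cobd, map_sum]

lemma exists_clear_denominators [Finite V] {R : Type*} [CommRing R] (p : Ideal R) [p.IsPrime]
    (e : V → ℕ) (y : V → R) (z : Finset V → R) (b : Finset V → Localization.AtPrime p)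
    (s : Finset (Finset V))
    (hb : ∀ S ∈ s, algebraMap R (Localization.AtPrime p) (z S) =
      cobd e (fun v => algebraMap R (Localization.AtPrime p) (y v)) b S) :
    ∃ t ∉ p, ∃ w : Finset V → R, ∀ S ∈ s, t * z S = cobd e y w S := by
  obtain ⟨u, hu⟩ := IsLocalization.exist_integer_multiples_of_finite p.primeCompl b
  choose w hw using hu
  have key : ∀ S, ∃ c : p.primeCompl, S ∈ s → c * (u * z S) = c * cobd e y w S := fun S => by
    by_cases hS : S ∈ s
    · have h : algebraMap R (Localization.AtPrime p) (u * z S) =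
          algebraMap R (Localization.AtPrime p) (cobd e y w S) := by
        rw [map_mul, hb S hS, map_cobd, ← smul_eq_mul, ← cobd_smul]
        exact cobd_congr e _ fun v _ => by rw [hw, Pi.smul_apply, algebraMap_smul]
      obtain ⟨c, hc⟩ := (IsLocalization.eq_iff_exists p.primeCompl _).1 h
      exact ⟨c, fun _ => hc⟩
    · exact ⟨1, fun h => absurd h hS⟩
  choose c hc using key
  refine ⟨((∏ S ∈ s, c S) * u : p.primeCompl), ((∏ S ∈ s, c S) * u : p.primeCompl).2,
    ((∏ S ∈ s, c S : p.primeCompl) : R) • w, fun S hS => ?_⟩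
  rw [cobd_smul, smul_eq_mul, ← Finset.prod_erase_mul _ _ hS]
  simp only [Submonoid.coe_mul]
  rw [mul_assoc, mul_assoc, mul_assoc, hc S hS]

end Koszul

namespace SComplex

open Koszul MvPolynomial

/-- The exponent vector of the squarefree monomial with support `S`. -/
noncomputable def indic {V : Type} (S : Finset V) : V →₀ ℕ := ∑ v ∈ S, Finsupp.single v 1

lemma prod_X_eq_monomial {V : Type} (k : Type) [Field k] (S : Finset V) :
    ∏ v ∈ S, (X v : MvPolynomial V k) = monomial (indic S) 1 := by
  simp only [X, indic]
  rw [← monomial_sum_one]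

lemma indic_apply {V : Type} [DecidableEq V] (S : Finset V) (v : V) :
    indic S v = if v ∈ S then 1 else 0 := by
  simp [indic, Finsupp.finsetSum_apply, Finsupp.single_apply]

section FacePrime

variable {V : Type} [DecidableEq V] (k : Type) [Field k]

/-- The map killing the variables outside `F`. -/
noncomputable def killOutside (F : Finset V) : MvPolynomial V k →ₐ[k] MvPolynomial V k :=
  aeval fun v => if v ∈ F then X v else 0

lemma killOutside_X (F : Finset V) (v : V) :
    killOutside k F (X v) = if v ∈ F then X v else 0 := by
  simp [killOutside]

lemma killOutside_eq_zero_iff (F : Finset V) (f : MvPolynomial V k) :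
    killOutside k F f = 0 ↔ f ∈ Ideal.span (X '' {v : V | v ∉ F}) := by
  constructor
  · intro h
    set J : Ideal (MvPolynomial V k) := Ideal.span (X '' {v : V | v ∉ F})
    have h1 : (Ideal.Quotient.mkₐ k J).comp (killOutside k F) = Ideal.Quotient.mkₐ k J := by
      refine MvPolynomial.algHom_ext fun v => ?_
      rw [AlgHom.comp_apply, killOutside_X]
      split_ifs with hv
      · rfl
      · rw [map_zero, eq_comm, Ideal.Quotient.mkₐ_eq_mk, Ideal.Quotient.eq_zero_iff_mem]
        exact Ideal.subset_span ⟨v, hv, rfl⟩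
    have h2 := DFunLike.congr_fun h1 f
    rw [AlgHom.comp_apply, h, map_zero, Ideal.Quotient.mkₐ_eq_mk] at h2
    exact Ideal.Quotient.eq_zero_iff_mem.1 h2.symm
  · intro h
    have : Ideal.span (X '' {v : V | v ∉ F}) ≤ RingHom.ker (killOutside k F) := by
      rw [Ideal.span_le]
      rintro _ ⟨v, hv, rfl⟩
      simpa [RingHom.mem_ker, killOutside_X] using hv
    exact this h

variable (K : SComplex V)

lemma srIdeal_le_ker_killOutside {F : Finset V} (hF : F ∈ K.faces) :
    srIdeal k K ≤ RingHom.ker (killOutside k F : MvPolynomial V k →+* MvPolynomial V k) := by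
  rw [srIdeal, Ideal.span_le]
  rintro _ ⟨S, hS, rfl⟩
  obtain ⟨v, hv, hvF⟩ := Finset.not_subset.1 fun h => hS (K.down_closed hF h)
  simp only [SetLike.mem_coe, RingHom.mem_ker, RingHom.coe_coe, map_prod]
  exact Finset.prod_eq_zero hv (by rw [killOutside_X, if_neg hvF])

/-- The prime of the Stanley–Reisner ring generated by the variables outside the face `F`. -/
noncomputable def facePrime {F : Finset V} (hF : F ∈ K.faces) : Ideal (SRRing k K) :=
  RingHom.ker (Ideal.Quotient.lift (srIdeal k K)
    (killOutside k F : MvPolynomial V k →+* MvPolynomial V k)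
    fun _ h => srIdeal_le_ker_killOutside k K hF h)

instance {F : Finset V} (hF : F ∈ K.faces) : (facePrime k K hF).IsPrime :=
  RingHom.ker_isPrime _

lemma mk_mem_facePrime {F : Finset V} (hF : F ∈ K.faces) (f : MvPolynomial V k) :
    Ideal.Quotient.mk (srIdeal k K) f ∈ facePrime k K hF ↔ killOutside k F f = 0 := by
  exact Iff.rfl

lemma facePrime_lt {F G : Finset V} (hF : F ∈ K.faces) (hG : G ∈ K.faces) (h : F ⊂ G) :
    facePrime k K hG < facePrime k K hF := by
  refine lt_of_le_of_ne ?_ ?_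
  · intro f hf
    obtain ⟨f, rfl⟩ := Ideal.Quotient.mk_surjective f
    rw [mk_mem_facePrime, killOutside_eq_zero_iff] at hf ⊢
    exact Ideal.span_mono (Set.image_mono fun v (hv : v ∉ G) hvF => hv (h.1 hvF)) hf
  · obtain ⟨v, hv, hvF⟩ := Finset.exists_of_ssubset h
    intro heq
    have h1 := mk_mem_facePrime k K hF (X v)
    rw [← heq, mk_mem_facePrime, killOutside_X, killOutside_X, if_pos hv, if_neg hvF] at h1
    exact X_ne_zero v (h1.2 rfl)

lemma le_height_facePrime {F : Finset V} (hF : F ∈ K.faces) {G : Finset V} (hG : G ∈ K.faces)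
    (h : F ⊆ G) : ((G.card - F.card : ℕ) : ℕ∞) ≤ (facePrime k K hF).height := by
  generalize hm : G.card - F.card = m
  induction m generalizing F with
  | zero => simp
  | succ m ih =>
    obtain ⟨v, hv, hvF⟩ := Finset.exists_of_ssubset
      (h.ssubset_of_ne fun h => by subst h; simp at hm)
    have hvG : insert v F ⊆ G := Finset.insert_subset hv h
    have hF' : insert v F ∈ K.faces := K.down_closed hG hvG
    have hlt := facePrime_lt k K hF hF' (Finset.ssubset_insert hvF)
    have h1 := ih hF' hvG (by rw [Finset.card_insert_of_notMem hvF]; omega)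
    have h2 := Ideal.height_add_one_le_of_lt_of_isPrime hlt
    push_cast
    exact (add_le_add_left h1 1).trans h2

lemma coeff_eq_zero_of_mem_srIdeal {f : MvPolynomial V k} (hf : f ∈ srIdeal k K) {m : V →₀ ℕ}
    (hm : m.support ∈ K.faces) : coeff m f = 0 := by
  rw [srIdeal] at hf
  induction hf using Submodule.span_induction generalizing m with
  | mem f hf =>
    obtain ⟨S, hS, rfl⟩ := hf
    by_contra h
    refine hS (K.down_closed hm fun v hv => ?_)
    have h1 : ∏ v ∈ S, (X v : MvPolynomial V k) = X v * ∏ v ∈ S.erase v, X v :=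
      (Finset.mul_prod_erase S _ hv).symm
    simp only at h
    rw [h1, coeff_X_mul'] at h
    by_contra hv'
    exact h (if_neg hv')
  | zero => simp
  | add f g _ _ hf hg => rw [coeff_add, hf hm, hg hm, add_zero]
  | smul a f _ hf =>
    rw [smul_eq_mul, coeff_mul]
    refine Finset.sum_eq_zero fun x hx => ?_
    rw [hf (K.down_closed hm _), mul_zero]
    intro v hv
    have := DFunLike.congr_fun (Finset.HasAntidiagonal.mem_antidiagonal.1 hx) v
    simp only [Finsupp.mem_support_iff, Finsupp.add_apply] at hv this ⊢
    omega

/-- The membership predicate of the link of `F` in `K`. -/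
def IsLinkFace (F S : Finset V) : Prop := Disjoint S F ∧ S ∪ F ∈ K.faces

/-- If the Koszul cohomology of the variables outside `F` vanishes in the local ring at the prime of
`F`, then so does the cohomology of the link of `F`. -/
lemma isExact_link_of_isExact [Fintype V] {F : Finset V} (hF : F ∈ K.faces) {e : V → ℕ} {i : ℕ}
    (h : IsExact e (fun v => algebraMap (SRRing k K) (Localization.AtPrime (facePrime k K hF))
        (if v ∈ F then 0 else Ideal.Quotient.mk _ (X v)))
      (Localization.AtPrime (facePrime k K hF)) (fun _ => True) i) :
    IsExact e (1 : V → k) k (K.IsLinkFace F) i := by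
  classical
  intro c hc
  set A := Localization.AtPrime (facePrime k K hF)
  set y : V → MvPolynomial V k := fun v => if v ∈ F then 0 else X v with hy
  set c' : Finset V → k := fun S => if K.IsLinkFace F S then c S else 0 with hc'
  set z : Finset V → MvPolynomial V k := fun S => C (c' S) * ∏ v ∈ S, X v with hz
  set q := Ideal.Quotient.mk (srIdeal k K)
  have hyq : (fun v => algebraMap (SRRing k K) A (if v ∈ F then 0 else q (X v))) =
      fun v => algebraMap (SRRing k K) A (q (y v)) := by
    funext v
    simp only [hy]
    split_ifs <;> simp
  rw [hyq] at h
  have hunit : IsUnit (algebraMap (SRRing k K) A (q (∏ v ∈ F, X v))) := by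
    refine IsLocalization.map_units A (⟨_, ?_⟩ : (facePrime k K hF).primeCompl)
    rw [Ideal.mem_primeCompl_iff, mk_mem_facePrime, map_prod, Finset.prod_eq_zero_iff]
    rintro ⟨v, hv, hv'⟩
    rw [killOutside_X, if_pos hv] at hv'
    exact X_ne_zero v hv'
  have hzero : ∀ T : Finset V, Disjoint T F → ¬ K.IsLinkFace F T →
      algebraMap (SRRing k K) A (q (∏ v ∈ T, X v)) = 0 := by
    intro T hT hTF
    refine (hunit.mul_left_eq_zero).1 ?_
    rw [← map_mul, ← map_mul, ← Finset.prod_union hT]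
    rw [Ideal.Quotient.eq_zero_iff_mem.2, map_zero]
    exact Ideal.subset_span ⟨_, fun h => hTF ⟨hT, h⟩, rfl⟩
  have hmul : ∀ T, ∀ v ∈ T, y v * z (T.erase v) =
      (if Disjoint T F then C (c' (T.erase v)) else 0) * ∏ v ∈ T, X v := by
    intro T v hv
    by_cases hvF : v ∈ F
    · rw [if_neg fun h => Finset.disjoint_left.1 h hv hvF]
      simp [hy, hvF]
    · split_ifs with hT
      · rw [← Finset.mul_prod_erase T _ hv]
        simp only [hy, hz, if_neg hvF]
        ring
      · have : ¬ K.IsLinkFace F (T.erase v) := fun h => hT <| by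
          rw [← Finset.insert_erase hv, Finset.disjoint_insert_left]
          exact ⟨hvF, h.1⟩
        simp [hz, hc', this]
  have hcob : ∀ T : Finset V, cobd e y z T =
      (if Disjoint T F then C (cobd e (1 : V → k) c' T) else 0) * ∏ v ∈ T, X v := by
    intro T
    rw [cobd, Finset.sum_congr rfl fun v hv => by rw [smul_eq_mul, hmul T v hv]]
    split_ifs with hT
    · simp only [cobd, map_sum, map_zsmul, Finset.sum_mul, smul_mul_assoc, Pi.one_apply, one_smul]
    · simp
  obtain ⟨b, hb⟩ := h (fun S => algebraMap (SRRing k K) A (q (z S))) fun T _ hT => by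
    rw [← map_cobd, ← map_cobd, hcob]
    split_ifs with hTF
    · by_cases hTK : K.IsLinkFace F T
      · rw [cobd_congr e (1 : V → k) (d := c), hc T hTK hT]
        · simp
        · intro v hv
          have : K.IsLinkFace F (T.erase v) :=
            ⟨hTK.1.mono_left (Finset.erase_subset _ _), K.down_closed hTK.2
              (Finset.union_subset_union_left (Finset.erase_subset _ _))⟩
          simp [hc', this]
      · rw [map_mul, map_mul, hzero T hTF hTK, mul_zero]
    · simp
  obtain ⟨t, ht, w, hw⟩ := exists_clear_denominators (facePrime k K hF) e (fun v => q (y v))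
    (fun S => q (z S)) b (Finset.univ.filter fun S => S.card = i)
    fun S hS => hb S trivial (Finset.mem_filter.1 hS).2
  obtain ⟨t, rfl⟩ := Ideal.Quotient.mk_surjective t
  choose w' hw' using fun S => Ideal.Quotient.mk_surjective (w S)
  obtain rfl : (fun S => q (w' S)) = w := funext hw'
  rw [mk_mem_facePrime, killOutside_eq_zero_iff, mem_ideal_span_X_image] at ht
  push Not at ht
  obtain ⟨a, ha, haF⟩ := ht
  have haF' : a.support ⊆ F := fun v hv => by
    by_contra hvF
    exact (Finsupp.mem_support_iff.1 hv) (haF v hvF)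
  refine ⟨fun S => (coeff a t)⁻¹ * coeff (a + indic S) (w' S), fun S hS hi => ?_⟩
  have h1 := hw S (by simp [hi])
  rw [← map_cobd, ← map_mul, Ideal.Quotient.eq] at h1
  have h2 := coeff_eq_zero_of_mem_srIdeal k K h1 (m := a + indic S)
    (K.down_closed hS.2 fun v hv => by
      by_contra hv'
      rw [Finset.mem_union, not_or] at hv'
      have : a v = 0 := haF v hv'.2
      simp [indic_apply, this, hv'.1] at hv)
  rw [coeff_sub, sub_eq_zero] at h2
  have h3 : coeff (a + indic S) (t * z S) = coeff a t * c S := by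
    simp only [hz, hc', if_pos hS]
    rw [mul_left_comm, coeff_C_mul, prod_X_eq_monomial, coeff_mul_monomial]
    ring
  have h4 : coeff (a + indic S) (cobd e y w' S) =
      cobd e (1 : V → k) (fun S => coeff (a + indic S) (w' S)) S := by
    rw [cobd, cobd, coeff_sum]
    refine Finset.sum_congr rfl fun v hv => ?_
    have h5 : a + indic S = Finsupp.single v 1 + (a + indic (S.erase v)) := by
      rw [indic, ← Finset.add_sum_erase _ _ hv, indic]; abel
    have h6 : v ∉ F := Finset.disjoint_left.1 hS.1 hv
    rw [coeff_smul]
    simp only [hy, if_neg h6, smul_eq_mul, Pi.one_apply, one_mul]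
    rw [h5, coeff_X_mul]
  rw [h3, h4] at h2
  have h7 : (fun S => (coeff a t)⁻¹ * coeff (a + indic S) (w' S)) =
      (coeff a t)⁻¹ • fun S => coeff (a + indic S) (w' S) := rfl
  rw [h7, cobd_smul, ← h2, smul_eq_mul, inv_mul_cancel_left₀ (mem_support_iff.1 ha)]

/-- Serre's condition forces the reduced cohomology of links to vanish. -/
theorem SerreS.isExact_link [Fintype V] {ℓ : ℕ} (h : SerreS k ℓ K) {e : V → ℕ}
    (he : Function.Injective e) {F G : Finset V} (hG : G ∈ K.faces) (hFG : F ⊆ G) {i : ℕ}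
    (hiℓ : i < ℓ) (hi : i + F.card < G.card) : IsExact e (1 : V → k) k (K.IsLinkFace F) i := by
  have hF : F ∈ K.faces := K.down_closed hG hFG
  have h1 := h (facePrime k K hF) inferInstance
  rw [IsLocalization.AtPrime.ringKrullDim_eq_height (facePrime k K hF)] at h1
  have h2 := le_height_facePrime k K hF hG hFG
  set A := Localization.AtPrime (facePrime k K hF)
  have h3 : i + 1 ≤ depthIn A (IsLocalRing.maximalIdeal A) := by
    have h4 : ((i + 1 : ℕ) : ℕ∞) ≤ (facePrime k K hF).height :=
      (Nat.cast_le.2 (by omega)).trans h2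
    have h5 : (((i + 1 : ℕ) : ℕ∞) : WithBot ℕ∞) ≤
        ((depthIn A (IsLocalRing.maximalIdeal A) : ℕ∞) : WithBot ℕ∞) :=
      (le_min (WithBot.coe_le_coe.2 (Nat.cast_le.2 hiℓ)) (WithBot.coe_le_coe.2 h4)).trans h1
    exact Nat.cast_le.1 (WithBot.coe_le_coe.1 h5)
  have h4 : depthIn A (IsLocalRing.maximalIdeal A) ∈ {n : ℕ | ∃ rs : List A, rs.length = n ∧
      (∀ r ∈ rs, r ∈ IsLocalRing.maximalIdeal A) ∧ RingTheory.Sequence.IsRegular A rs} :=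
    Nat.sSup_mem (Set.nonempty_iff_ne_empty.2 fun h0 => by
      rw [depthIn, h0, csSup_empty] at h3; exact absurd h3 (by simp)) (by
      by_contra h0
      rw [depthIn, Nat.sSup_of_not_bddAbove h0] at h3
      omega)
  obtain ⟨rs, hlen, hrs, hreg⟩ := h4
  refine isExact_link_of_isExact k K hF (isExact_of_isWeaklyRegular he _ rs A i ?_
    hreg.toIsWeaklyRegular (by omega))
  intro r hr
  have h5 := hrs r hr
  rw [← Localization.AtPrime.map_eq_maximalIdeal] at h5
  refine (Ideal.map_le_iff_le_comap.2 ?_) h5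
  intro f hf
  obtain ⟨f, rfl⟩ := Ideal.Quotient.mk_surjective f
  rw [mk_mem_facePrime, killOutside_eq_zero_iff] at hf
  have h6 : Ideal.span (X '' {v : V | v ∉ F}) ≤ Ideal.comap (Ideal.Quotient.mk (srIdeal k K))
      (Ideal.comap (algebraMap (SRRing k K) A) (Ideal.span (Set.range fun v =>
        algebraMap (SRRing k K) A (if v ∈ F then 0 else Ideal.Quotient.mk _ (X v))))) := by
    rw [Ideal.span_le]
    rintro _ ⟨v, hv, rfl⟩
    refine Ideal.subset_span ⟨v, ?_⟩
    simp only [if_neg (show v ∉ F from hv)]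
  exact h6 hf

end FacePrime

end SComplex

/-! ### Vanishing of homology from vanishing of cohomology -/

namespace SComplex

open Koszul

section

variable {V : Type} [DecidableEq V]

/-- The vertex numbering underlying `arbOrder`. -/
noncomputable def numbering (V : Type) [Fintype V] (v : V) : ℕ := Fintype.equivFin V v

lemma numbering_injective (V : Type) [Fintype V] : Function.Injective (numbering V) :=
  Fin.val_injective.comp (Fintype.equivFin V).injective

lemma map_bd_single [Fintype V] (k : Type) [Field k] (K : SComplex V) (n : ℕ) (s : Faces K n)
    (f : ChainsOf k K (n - 1) →ₗ[k] k) (b : Finset V → k)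
    (hf : ∀ u : Faces K (n - 1), f (Finsupp.single u 1) = b u.1) :
    f (bd k K n (Finsupp.single s 1)) = cobd (numbering V) (1 : V → k) b s.1 := by
  rw [bd, Finsupp.lsum_single, LinearMap.toSpanSingleton_apply, one_smul, cobd,
    ← Finset.sum_attach]
  refine (map_sum f _ _).trans (Finset.sum_congr rfl fun x _ => ?_)
  refine ((map_smul f _ _).trans (congrArg _ (hf _))).trans ?_
  simp only [sgn, zsmul_eq_mul, smul_eq_mul, Pi.one_apply, one_mul]
  push_cast
  rfl

lemma hVanish_of_isExact [Fintype V] (k : Type) [Field k] (K : SComplex V) (i : ℕ)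
    (h : IsExact (numbering V) (1 : V → k) k (fun S => S ∈ K.faces) i) : HVanish k K i := by
  classical
  intro z hz
  by_contra hz'
  obtain ⟨f, hfz, hf⟩ := Submodule.exists_le_ker_of_notMem hz'
  set c : Finset V → k := fun S =>
    if hS : S ∈ K.faces ∧ S.card = i then f (Finsupp.single ⟨S, hS⟩ 1) else 0 with hc
  obtain ⟨b, hb⟩ := h c fun T hT hi => by
    rw [← map_bd_single k K (i + 1) ⟨T, hT, hi⟩ f c]
    · exact hf ⟨_, rfl⟩
    · intro u
      have hu : u.1 ∈ K.faces ∧ u.1.card = i := u.2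
      change f (Finsupp.single u 1) = dite _ _ _
      rw [dif_pos hu]
      rfl
  set β : ChainsOf k K (i - 1) →ₗ[k] k := Finsupp.lsum k fun u : Faces K (i - 1) =>
    LinearMap.toSpanSingleton k k (b u.1) with hβ
  have hfβ : f = β.comp (bd k K i) := by
    refine Finsupp.lhom_ext' fun s => LinearMap.ext_ring ?_
    simp only [LinearMap.comp_apply, Finsupp.lsingle_apply]
    refine Eq.trans ?_ (map_bd_single k K i s β b ?_).symm
    rw [← hb s.1 s.2.1 s.2.2]
    · have hs : s.1 ∈ K.faces ∧ s.1.card = i := s.2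
      change f (Finsupp.single s 1) = dite _ _ _
      rw [dif_pos hs]
      rfl
    · intro u
      rw [hβ, Finsupp.lsum_single, LinearMap.toSpanSingleton_apply, one_smul]
  apply hfz
  rw [hfβ, LinearMap.comp_apply, LinearMap.mem_ker.1 hz, map_zero]

lemma card_le_rank {K : SComplex V} {F : Finset V} (hF : F ∈ K.faces) : F.card ≤ K.rank :=
  Finset.le_sup (f := Finset.card) hF

lemma exists_facet {K : SComplex V} {F : Finset V} (hF : F ∈ K.faces) :
    ∃ G, K.IsFacet G ∧ F ⊆ G := by
  obtain ⟨G, hFG, hG⟩ := K.faces.exists_le_maximal hF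
  exact ⟨G, ⟨hG.prop, fun H hH hGH => subset_antisymm hGH (hG.2 hH hGH)⟩, hFG⟩

lemma exists_card_eq_rank {K : SComplex V} (h : 0 < K.rank) : ∃ G ∈ K.faces, G.card = K.rank := by
  have hne : K.faces.Nonempty := by
    by_contra h0
    rw [Finset.not_nonempty_iff_eq_empty] at h0
    simp [rank, h0] at h
  obtain ⟨G, hG, h⟩ := Finset.exists_mem_eq_sup K.faces hne Finset.card
  exact ⟨G, hG, h.symm⟩

/-- A complex with connected links is pure. -/
lemma facets_card_eq {k : Type} [Field k] {K : SComplex V} {e : V → ℕ}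
    (he : Function.Injective e)
    (h : ∀ F G : Finset V, G ∈ K.faces → F ⊆ G → 1 + F.card < G.card →
      IsExact e (1 : V → k) k (K.IsLinkFace F) 1)
    {F A B : Finset V} (hA : K.IsFacet A) (hB : K.IsFacet B) (hFA : F ⊆ A) (hFB : F ⊆ B) :
    A.card = B.card := by
  classical
  induction hn : K.rank - F.card using Nat.strong_induction_on generalizing F A B with
  | _ n ih =>
  have step : ∀ v ∉ F, ∀ C D, K.IsFacet C → K.IsFacet D → insert v F ⊆ C → insert v F ⊆ D →
      C.card = D.card := fun v hv C D hC hD hvC hvD => by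
    refine ih _ ?_ hC hD hvC hvD rfl
    have h1 := card_le_rank hC.1
    have h2 := Finset.card_le_card hvC
    rw [Finset.card_insert_of_notMem hv] at *
    omega
  by_cases hAF : F = A
  · subst hAF; rw [hA.2 B hB.1 hFB]
  by_cases hBF : F = B
  · subst hBF; rw [hB.2 A hA.1 hFA]
  have hlk : ¬ A.card = B.card → IsExact e (1 : V → k) k (K.IsLinkFace F) 1 := fun hne => by
    have h1 := Finset.card_lt_card (hFA.ssubset_of_ne hAF)
    have h2 := Finset.card_lt_card (hFB.ssubset_of_ne hBF)
    by_cases h3 : 1 + F.card < A.card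
    · exact h F A hA.1 hFA h3
    · exact h F B hB.1 hFB (by omega)
  by_contra hne
  obtain ⟨a, ha, haF⟩ := Finset.exists_of_ssubset (hFA.ssubset_of_ne hAF)
  obtain ⟨b, hb, hbF⟩ := Finset.exists_of_ssubset (hFB.ssubset_of_ne hBF)
  set c : Finset V → k := fun S =>
    if ∃ C, K.IsFacet C ∧ S ∪ F ⊆ C ∧ C.card = A.card then 1 else 0 with hc
  have hcv : ∀ v ∉ F, ∀ D, K.IsFacet D → insert v F ⊆ D →
      c {v} = if D.card = A.card then 1 else 0 := fun v hv D hD hvD => by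
    simp only [hc]
    congr 1
    rw [eq_iff_iff]
    constructor
    · rintro ⟨C, hC, hvC, hCA⟩
      rw [← hCA]
      exact step v hv D C hD hC hvD (by rwa [Finset.insert_eq])
    · exact fun hDA => ⟨D, hD, by rwa [← Finset.insert_eq], hDA⟩
  obtain ⟨d, hd⟩ := hlk hne c fun T hT hT2 => by
    obtain ⟨v, w, hvw, rfl⟩ := Finset.card_eq_two.1 hT2
    obtain ⟨D, hD, hTD⟩ := exists_facet hT.2
    have hv : v ∉ F := Finset.disjoint_left.1 hT.1 (by simp)
    have hw : w ∉ F := Finset.disjoint_left.1 hT.1 (by simp)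
    have hvD : insert v F ⊆ D := fun x hx => hTD (by
      rcases Finset.mem_insert.1 hx with rfl | hx <;> simp [*])
    have hwD : insert w F ⊆ D := fun x hx => hTD (by
      rcases Finset.mem_insert.1 hx with rfl | hx <;> simp [*])
    have e1 : ({v, w} : Finset V).erase v = {w} := Finset.erase_insert (by simpa using hvw)
    have e2 : ({v, w} : Finset V).erase w = {v} := by
      rw [Finset.pair_comm]; exact Finset.erase_insert (by simpa using hvw.symm)
    rw [cobd, Finset.sum_pair hvw, e1, e2, hcv v hv D hD hvD, hcv w hw D hD hwD]
    simp only [Pi.one_apply, one_smul]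
    rw [← add_smul]
    have h1 := sgn_mul_sgn_insert he hvw (Finset.notMem_empty v) (Finset.notMem_empty w)
    have h2 : sgn e v {v, w} = sgn e v {w} := sgn_insert_self e v {w}
    have h3 : sgn e w {v, w} = sgn e w {v} := by
      rw [Finset.pair_comm]; exact sgn_insert_self e w {v}
    have h4 : ∀ x, sgn e x ∅ = 1 := fun x => by simp [sgn]
    rw [h4, h4, mul_one, mul_one] at h1
    rw [h2, h3]
    rw [show sgn e v {w} = -sgn e w {v} from h1]
    simp
  have hval : ∀ v, ∀ D, K.IsFacet D → F ⊆ D → v ∈ D → v ∉ F → c {v} = d ∅ := by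
    intro v D hD hFD hvD hvF
    rw [hd {v} ⟨by simpa using hvF, K.down_closed hD.1 (by
      rw [← Finset.insert_eq]; exact Finset.insert_subset hvD hFD)⟩ (by simp)]
    simp [cobd, sgn, Finset.filter_singleton]
  have h1 := hval a A hA hFA ha haF
  have h2 := hval b B hB hFB hb hbF
  rw [hcv a haF A hA (Finset.insert_subset ha hFA), if_pos rfl] at h1
  rw [hcv b hbF B hB (Finset.insert_subset hb hFB), if_neg (Ne.symm hne), ← h1] at h2
  exact zero_ne_one h2

/-- In positive degrees, links in a complex satisfying Serre's condition have vanishing cohomology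
in a range depending only on the cardinality of the face. -/
lemma SerreS.isExact_link_of_lt_rank {k : Type} [Field k] [Fintype V] {K : SComplex V} {ℓ : ℕ}
    (h : SerreS k ℓ K) {e : V → ℕ} (he : Function.Injective e) {F : Finset V} (hF : F ∈ K.faces)
    {i : ℕ} (h0 : 0 < i) (hiℓ : i < ℓ) (hi : i + F.card < K.rank) :
    IsExact e (1 : V → k) k (K.IsLinkFace F) i := by
  obtain ⟨G, hG, hGr⟩ := exists_card_eq_rank (K := K) (by omega)
  obtain ⟨B, hB, hGB⟩ := exists_facet hG
  obtain ⟨A, hA, hFA⟩ := exists_facet hF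
  have h1 := facets_card_eq (k := k) he
    (fun F G hG hFG hFG' => h.isExact_link k K he hG hFG (by omega) hFG')
    hA hB (Finset.empty_subset _) (Finset.empty_subset _)
  have h2 := Finset.card_le_card hGB
  exact h.isExact_link k K he hA.1 hFA hiℓ (by omega)

/-- A complex with a vertex has no cohomology in degree `-1`. -/
lemma isExact_zero {k : Type} [Field k] {L : Finset V → Prop} {e : V → ℕ} (p : V) (hp : L {p}) :
    IsExact e (1 : V → k) k L 0 := by
  intro c hc
  refine ⟨0, fun S _ hS => ?_⟩
  have h1 := hc {p} hp rfl
  rw [Finset.card_eq_zero.1 hS]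
  simpa [cobd, sgn, Finset.filter_singleton] using h1

end

end SComplex

/-! ### Truncations of order complexes -/

section OrderComplex

open SComplex Koszul

variable {P : Type} [DecidableEq P] [Fintype P] [PartialOrder P] [∀ a b : P, Decidable (a ≤ b)]

lemma mem_orderComplex {C : Finset P} :
    C ∈ (orderComplex P).faces ↔ ∀ a ∈ C, ∀ b ∈ C, a ≤ b ∨ b ≤ a := by
  simp [orderComplex]

lemma card_le_pheight {p : P} {C : Finset P} (hC : C ∈ (orderComplex P).faces) (hp : p ∈ C)
    (hle : ∀ a ∈ C, a ≤ p) : C.card ≤ pheight p :=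
  Finset.le_sup (f := Finset.card) (Finset.mem_filter.2
    ⟨Finset.mem_univ _, hp, hle, mem_orderComplex.1 hC⟩)

lemma exists_card_eq_pheight (p : P) :
    ∃ C ∈ (orderComplex P).faces, p ∈ C ∧ (∀ a ∈ C, a ≤ p) ∧ C.card = pheight p := by
  obtain ⟨C, hC, h⟩ := Finset.exists_mem_eq_sup (Finset.univ.filter fun C : Finset P =>
    p ∈ C ∧ (∀ a ∈ C, a ≤ p) ∧ ∀ a ∈ C, ∀ b ∈ C, a ≤ b ∨ b ≤ a) ⟨{p}, by simp⟩ Finset.card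
  obtain ⟨h1, h2, h3⟩ := (Finset.mem_filter.1 hC).2
  exact ⟨C, mem_orderComplex.2 h3, h1, h2, h.symm⟩

lemma insert_mem_orderComplex {C : Finset P} {p : P} (hC : C ∈ (orderComplex P).faces)
    (hp : ∀ a ∈ C, a ≤ p ∨ p ≤ a) : insert p C ∈ (orderComplex P).faces := by
  rw [mem_orderComplex] at hC ⊢
  intro a ha b hb
  rcases Finset.mem_insert.1 ha with rfl | ha' <;> rcases Finset.mem_insert.1 hb with rfl | hb'
  · exact Or.inl le_rfl
  · exact (hp b hb').symm
  · exact hp a ha'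
  · exact hC a ha' b hb'

lemma pheight_lt_pheight {a b : P} (h : a < b) : pheight a < pheight b := by
  obtain ⟨C, hC, -, hle, hcard⟩ := exists_card_eq_pheight a
  have hb : b ∉ C := fun hb => (h.trans_le (hle b hb)).false
  have h1 := card_le_pheight (insert_mem_orderComplex hC fun x hx => Or.inl ((hle x hx).trans h.le))
    (Finset.mem_insert_self b C) fun x hx => by
      rcases Finset.mem_insert.1 hx with rfl | hx
      exacts [le_rfl, (hle x hx).trans h.le]
  rw [Finset.card_insert_of_notMem hb, hcard] at h1
  omega

lemma exists_pheight_ge_rank (h : 0 < (orderComplex P).rank) :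
    ∃ p : P, (orderComplex P).rank ≤ pheight p := by
  obtain ⟨C, hC, hcard⟩ := exists_card_eq_rank h
  obtain ⟨p, hp, hmax⟩ := C.exists_maximal (Finset.card_pos.1 (hcard ▸ h))
  refine ⟨p, hcard ▸ card_le_pheight hC hp fun a ha => ?_⟩
  rcases mem_orderComplex.1 hC a ha p hp with h | h
  exacts [h, hmax ha h]

variable {k : Type} [Field k]

/-- Deleting an element of minimal height from an upper part of the poset. -/
lemma isExact_erase_of_isExact {e : P → ℕ} (he : Function.Injective e) {Q : Finset P} {p : P}
    (hmin : ∀ x ∈ Q, pheight p ≤ pheight x) (hup : ∀ x, p < x → x ∈ Q) (hpQ : p ∈ Q) {i : ℕ}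
    (h : IsExact e (1 : P → k) k (fun S => S ⊆ Q ∧ S ∈ (orderComplex P).faces) i)
    (hlk : ∀ C ∈ (orderComplex P).faces, C.card = pheight p →
      IsExact e (1 : P → k) k ((orderComplex P).IsLinkFace C) i) :
    IsExact e (1 : P → k) k (fun S => S ⊆ Q.erase p ∧ S ∈ (orderComplex P).faces) i := by
  obtain ⟨C, hC, hpC, hle, hcard⟩ := exists_card_eq_pheight p
  refine isExact_congr (fun S => ?_) (isExact_deletion he
    (fun S T hS hT => ⟨hT.trans hS.1, (orderComplex P).down_closed hS.2 hT⟩) p h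
    (isExact_congr (fun S => ?_) (hlk C hC hcard)))
  · rw [Finset.subset_erase]
    tauto
  · constructor
    · rintro ⟨hd, hSC⟩
      have hpS : p ∉ S := fun hpS => Finset.disjoint_left.1 hd hpS hpC
      rw [mem_orderComplex] at hSC
      have hpx : ∀ x ∈ S, p < x := fun x hx => by
        have hxC : x ∉ C := Finset.disjoint_left.1 hd hx
        rcases hSC p (by simp [hpC]) x (by simp [hx]) with h | h
        · exact lt_of_le_of_ne h fun h => hpS (h ▸ hx)
        · have h1 := card_le_pheight (p := p) (C := insert x C)
            (insert_mem_orderComplex hC fun a ha => hSC a (by simp [ha]) x (by simp [hx]))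
            (by simp [hpC]) fun a ha => by
              rcases Finset.mem_insert.1 ha with rfl | ha
              exacts [h, hle a ha]
          rw [Finset.card_insert_of_notMem hxC] at h1
          omega
      refine ⟨hpS, Finset.insert_subset hpQ fun x hx => hup x (hpx x hx),
        mem_orderComplex.2 fun a ha b hb => hSC a ?_ b ?_⟩
      · rcases Finset.mem_insert.1 ha with rfl | ha <;> simp [*]
      · rcases Finset.mem_insert.1 hb with rfl | hb <;> simp [*]
    · rintro ⟨hpS, hSQ, hS⟩
      rw [mem_orderComplex] at hS
      have hpx : ∀ x ∈ S, p < x := fun x hx => by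
        rcases hS p (by simp) x (by simp [hx]) with h | h
        · exact lt_of_le_of_ne h fun h => hpS (h ▸ hx)
        · have h1 := pheight_lt_pheight (lt_of_le_of_ne h fun h => hpS (h ▸ hx))
          have h2 := hmin x (hSQ (by simp [hx]))
          omega
      refine ⟨Finset.disjoint_left.2 fun x hx hxC => ((hpx x hx).trans_le (hle x hxC)).false,
        mem_orderComplex.2 fun a ha b hb => ?_⟩
      rcases Finset.mem_union.1 ha with ha | ha <;> rcases Finset.mem_union.1 hb with hb | hb
      · exact hS a (by simp [ha]) b (by simp [hb])
      · exact Or.inr ((hle b hb).trans (hpx a ha).le)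
      · exact Or.inl ((hle a ha).trans (hpx b hb).le)
      · exact mem_orderComplex.1 hC a ha b hb

lemma isExact_of_pheight_le {e : P → ℕ} (he : Function.Injective e) {i j : ℕ}
    (hlk : ∀ C ∈ (orderComplex P).faces, C.card ≤ j →
      IsExact e (1 : P → k) k ((orderComplex P).IsLinkFace C) i) (Q : Finset P)
    (hQ : ∀ p ∉ Q, pheight p ≤ j ∧ ∀ x ∈ Q, pheight p ≤ pheight x) :
    IsExact e (1 : P → k) k (fun S => S ⊆ Q ∧ S ∈ (orderComplex P).faces) i := by
  induction hn : Qᶜ.card using Nat.strong_induction_on generalizing Q with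
  | _ n ih =>
  rcases Qᶜ.eq_empty_or_nonempty with hQe | hQn
  · rw [Finset.compl_eq_empty_iff] at hQe
    subst hQe
    refine isExact_congr (fun S => ?_) (hlk ∅ (by simp [mem_orderComplex]) (by simp))
    simp [IsLinkFace]
  · obtain ⟨p, hp, hmax⟩ := Qᶜ.exists_max_image pheight hQn
    have hpQ : p ∉ Q := Finset.mem_compl.1 hp
    have key := ih (insert p Q)ᶜ.card ?_ (insert p Q) ?_ rfl
    · rw [← Finset.erase_insert hpQ]
      refine isExact_erase_of_isExact he ?_ ?_ (Finset.mem_insert_self p Q) key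
        fun C hC hcard => hlk C hC (hcard.trans_le (hQ p hpQ).1)
      · intro x hx
        rcases Finset.mem_insert.1 hx with rfl | hx
        exacts [le_rfl, (hQ p hpQ).2 x hx]
      · intro x hx
        by_contra hxQ
        have h1 := hmax x (Finset.mem_compl.2 fun h => hxQ (Finset.mem_insert_of_mem h))
        exact (pheight_lt_pheight hx).not_ge h1
    · rw [← hn, Finset.compl_insert]
      exact Finset.card_erase_lt_of_mem hp
    · intro q hq
      rw [Finset.mem_insert, not_or] at hq
      refine ⟨(hQ q hq.2).1, fun x hx => ?_⟩
      rcases Finset.mem_insert.1 hx with rfl | hx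
      exacts [hmax q (Finset.mem_compl.2 hq.2), (hQ q hq.2).2 x hx]

theorem SComplex.SerreS.hVanish_ocAbove {ℓ : ℕ} (h : SerreS k ℓ (orderComplex P)) {i j : ℕ}
    (hij : i + j < (orderComplex P).rank) (hiℓ : i < ℓ) : HVanish k (ocAbove P j) i := by
  have hmem : ∀ S, S ∈ (ocAbove P j).faces ↔
      S ⊆ (Finset.univ.filter fun p => j < pheight p) ∧ S ∈ (orderComplex P).faces := fun S => by
    rw [ocAbove, restrict, Finset.mem_filter, and_comm]
  refine hVanish_of_isExact k _ i ?_
  rcases Nat.eq_zero_or_pos i with rfl | h0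
  · obtain ⟨p, hp⟩ := exists_pheight_ge_rank (P := P) (by omega)
    refine isExact_zero p ((hmem _).2 ⟨?_, ?_⟩)
    · simpa using by omega
    · simp [mem_orderComplex]
  · refine isExact_congr (fun S => (hmem S).symm)
      (isExact_of_pheight_le (numbering_injective P) (j := j) (fun C hC hcard =>
        h.isExact_link_of_lt_rank (numbering_injective P) hC h0 hiℓ (by omega)) _ ?_)
    intro p hp
    simp only [Finset.mem_filter, Finset.mem_univ, true_and, not_lt] at hp ⊢
    exact ⟨hp, fun x hx => by omega⟩

end OrderComplex

/-! ### Truncations of the face poset of a complex -/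

namespace SComplex

open Koszul Sum

section MixedComplex

variable {V : Type} [DecidableEq V]

/-- A face of the complex interpolating between the link of `F` in `K` and the order complex of a
set `Q` of faces of `K` containing `F`: it consists of a face of the link of `F`, with vertices in
`U`, and of a chain of members of `Q` that contain this face and `F`. -/
structure IsMixedFace (K : SComplex V) (Q : Finset (Finset V)) (U F : Finset V)
    (S : Finset (V ⊕ Finset V)) : Prop where
  left : ∀ a, inl a ∈ S → a ∈ U ∧ a ∉ F
  right : ∀ G, inr G ∈ S → G ∈ Q ∧ G ∈ K.faces ∧ F ⊆ G
  chain : ∀ G H, inr G ∈ S → inr H ∈ S → G ⊆ H ∨ H ⊆ G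
  union_mem : S.toLeft ∪ F ∈ K.faces
  mem_right : ∀ a G, inl a ∈ S → inr G ∈ S → a ∈ G

variable {K : SComplex V} {Q : Finset (Finset V)} {U F : Finset V}

lemma IsMixedFace.mono {S T : Finset (V ⊕ Finset V)} (h : K.IsMixedFace Q U F S) (hT : T ⊆ S) :
    K.IsMixedFace Q U F T where
  left a ha := h.left a (hT ha)
  right G hG := h.right G (hT hG)
  chain G H hG hH := h.chain G H (hT hG) (hT hH)
  union_mem := K.down_closed h.union_mem
    (Finset.union_subset_union_left (Finset.toLeft_monotone hT))
  mem_right a G ha hG := h.mem_right a G (hT ha) (hT hG)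

lemma isMixedFace_erase_left {v : V} {S : Finset (V ⊕ Finset V)} :
    inl v ∉ S ∧ K.IsMixedFace Q U F S ↔ K.IsMixedFace Q (U.erase v) F S := by
  constructor
  · rintro ⟨hv, h⟩
    exact ⟨fun a ha => ⟨Finset.mem_erase.2 ⟨fun h => hv (h ▸ ha), (h.left a ha).1⟩,
      (h.left a ha).2⟩, h.right, h.chain, h.union_mem, h.mem_right⟩
  · intro h
    exact ⟨fun hv => Finset.notMem_erase _ _ (h.left v hv).1,
      fun a ha => ⟨Finset.mem_of_mem_erase (h.left a ha).1, (h.left a ha).2⟩,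
      h.right, h.chain, h.union_mem, h.mem_right⟩

lemma isMixedFace_erase_right {G : Finset V} {S : Finset (V ⊕ Finset V)} :
    inr G ∉ S ∧ K.IsMixedFace Q U F S ↔ K.IsMixedFace (Q.erase G) U F S := by
  constructor
  · rintro ⟨hv, h⟩
    exact ⟨h.left, fun H hH => ⟨Finset.mem_erase.2 ⟨fun h => hv (h ▸ hH), (h.right H hH).1⟩,
      (h.right H hH).2⟩, h.chain, h.union_mem, h.mem_right⟩
  · intro h
    exact ⟨fun hv => Finset.notMem_erase _ _ (h.right G hv).1, h.left,
      fun H hH => ⟨Finset.mem_of_mem_erase (h.right H hH).1, (h.right H hH).2⟩,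
      h.chain, h.union_mem, h.mem_right⟩

lemma toLeft_insert_inl_union (v : V) (S : Finset (V ⊕ Finset V)) (F : Finset V) :
    (insert (inl v) S).toLeft ∪ F = S.toLeft ∪ insert v F := by
  ext x
  simp only [Finset.mem_union, Finset.mem_toLeft, Finset.mem_insert, inl.injEq]
  tauto

lemma isMixedFace_insert_left {v : V} (hvU : v ∈ U) (hvF : v ∉ F) {S : Finset (V ⊕ Finset V)} :
    inl v ∉ S ∧ K.IsMixedFace Q U F (insert (inl v) S) ↔ K.IsMixedFace Q U (insert v F) S := by
  constructor
  · rintro ⟨hv, h⟩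
    refine ⟨fun a ha => ?_, fun G hG => ?_, fun G H hG hH => ?_, ?_, fun a G ha hG => ?_⟩
    · obtain ⟨h1, h2⟩ := h.left a (Finset.mem_insert_of_mem ha)
      exact ⟨h1, fun h3 => (Finset.mem_insert.1 h3).elim (fun h4 => hv (h4 ▸ ha)) h2⟩
    · obtain ⟨h1, h2, h3⟩ := h.right G (Finset.mem_insert_of_mem hG)
      exact ⟨h1, h2, Finset.insert_subset
        (h.mem_right v G (Finset.mem_insert_self _ _) (Finset.mem_insert_of_mem hG)) h3⟩
    · exact h.chain G H (Finset.mem_insert_of_mem hG) (Finset.mem_insert_of_mem hH)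
    · rw [← toLeft_insert_inl_union]
      exact h.union_mem
    · exact h.mem_right a G (Finset.mem_insert_of_mem ha) (Finset.mem_insert_of_mem hG)
  · intro h
    have hr : ∀ G, inr G ∈ insert (inl v) S → inr G ∈ S := fun G hG => by simpa using hG
    refine ⟨fun hv => (h.left v hv).2 (Finset.mem_insert_self _ _),
      fun a ha => ?_, fun G hG => ?_, fun G H hG hH => ?_, ?_, fun a G ha hG => ?_⟩
    · rcases Finset.mem_insert.1 ha with ha | ha
      · rw [inl.injEq] at ha
        subst ha
        exact ⟨hvU, hvF⟩
      · exact ⟨(h.left a ha).1, fun h1 => (h.left a ha).2 (Finset.mem_insert_of_mem h1)⟩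
    · obtain ⟨h1, h2, h3⟩ := h.right G (hr G hG)
      exact ⟨h1, h2, (Finset.subset_insert _ _).trans h3⟩
    · exact h.chain G H (hr G hG) (hr H hH)
    · rw [toLeft_insert_inl_union]
      exact h.union_mem
    · rcases Finset.mem_insert.1 ha with ha | ha
      · rw [inl.injEq] at ha
        subst ha
        exact (h.right G (hr G hG)).2.2 (Finset.mem_insert_self _ _)
      · exact h.mem_right a G ha (hr G hG)

/-- The numbering of a disjoint union given by numberings of both parts. -/
def sumNumbering {A B : Type} (e : A → ℕ) (f : B → ℕ) : A ⊕ B → ℕ :=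
  Sum.elim (fun a => 2 * e a) fun b => 2 * f b + 1

lemma sumNumbering_injective {A B : Type} {e : A → ℕ} {f : B → ℕ} (he : Function.Injective e)
    (hf : Function.Injective f) : Function.Injective (sumNumbering e f) := by
  rintro (a | a) (b | b) h <;> simp only [sumNumbering, Sum.elim_inl, Sum.elim_inr] at h
  · exact congrArg _ (he (by omega))
  · omega
  · omega
  · exact congrArg _ (hf (by omega))

variable {k : Type} [Field k]

lemma isExact_mixed_link {g : V ⊕ Finset V → ℕ} (hg : Function.Injective g) {v : V} (hvU : v ∈ U)
    {i : ℕ} (h : insert v F ∈ K.faces →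
      IsExact g (1 : V ⊕ Finset V → k) k (K.IsMixedFace Q U (insert v F)) i) :
    IsExact g (1 : V ⊕ Finset V → k) k
      (fun S => inl v ∉ S ∧ K.IsMixedFace Q U F (insert (inl v) S)) i := by
  by_cases hv : v ∉ F ∧ insert v F ∈ K.faces
  · exact isExact_congr (fun S => (isMixedFace_insert_left hvU hv.1).symm) (h hv.2)
  · refine isExact_of_cone hg (inl v) (fun S hS => absurd ⟨?_, ?_⟩ hv) i
    · exact (hS.2.left v (Finset.mem_insert_self _ _)).2
    · refine K.down_closed hS.2.union_mem ?_
      rw [toLeft_insert_inl_union]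
      exact Finset.subset_union_right

lemma isExact_mixed_of_mem {g : V ⊕ Finset V → ℕ} (hg : Function.Injective g)
    (hQ : ∀ G ∈ K.faces, F ⊆ G → G ∈ Q) (hF : F ∈ K.faces) (i : ℕ) :
    IsExact g (1 : V ⊕ Finset V → k) k (K.IsMixedFace Q U F) i := by
  induction U using Finset.induction_on generalizing F i with
  | empty =>
    have hl : ∀ S, K.IsMixedFace Q ∅ F S → ∀ a, inl a ∉ insert (inr F) S := fun S hS a ha => by
      simpa using (hS.left a (by simpa using ha)).1
    have hr : ∀ S, K.IsMixedFace Q ∅ F S → ∀ G, inr G ∈ insert (inr F) S → G = F ∨ inr G ∈ S :=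
      fun S hS G hG => by simpa using hG
    refine isExact_of_cone hg (inr F) (fun S hS => ⟨fun a ha => absurd ha (hl S hS a), ?_, ?_, ?_,
      fun a G ha => absurd ha (hl S hS a)⟩) i
    · intro G hG
      rcases hr S hS G hG with rfl | hG
      exacts [⟨hQ _ hF le_rfl, hF, le_rfl⟩, hS.right G hG]
    · intro G H hG hH
      rcases hr S hS G hG with rfl | hG' <;> rcases hr S hS H hH with rfl | hH'
      · exact Or.inl le_rfl
      · exact Or.inl (hS.right H hH').2.2
      · exact Or.inr (hS.right G hG').2.2
      · exact hS.chain G H hG' hH'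
    · refine K.down_closed hS.union_mem (Finset.union_subset_union_left fun a ha => ?_)
      exact absurd (Finset.mem_toLeft.1 ha) (hl S hS a)
  | insert v U hv ih =>
    refine isExact_of_deletion hg (fun _ _ => IsMixedFace.mono) (inl v)
      (isExact_congr (fun S => isMixedFace_erase_left.symm) ?_) fun l _ =>
        isExact_mixed_link hg (Finset.mem_insert_self v U) fun hvF =>
          isExact_congr (fun S => ?_) (ih (F := insert v F)
            (fun G hG hFG => hQ G hG ((Finset.subset_insert _ _).trans hFG)) hvF l)
    · rw [Finset.erase_insert hv]
      exact ih hQ hF i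
    · conv_lhs => rw [← Finset.erase_insert hv, ← isMixedFace_erase_left]
      exact and_iff_right_of_imp fun h hvS => (h.left v hvS).2 (Finset.mem_insert_self _ _)

lemma isExact_mixed_univ [Fintype V] {e : V → ℕ} {f : Finset V → ℕ} (he : Function.Injective e)
    (hf : Function.Injective f) {i : ℕ} (h : IsExact e (1 : V → k) k (K.IsLinkFace F) i)
    (hQ : ∀ G ∈ Q, F.card < G.card) :
    IsExact (sumNumbering e f) (1 : V ⊕ Finset V → k) k (K.IsMixedFace Q Finset.univ F) i := by
  have hg := sumNumbering_injective he hf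
  induction Q using Finset.induction_on_min_value (f := Finset.card (α := V)) with
  | empty =>
    refine (isExact_map_iff (e := e) Function.Embedding.inl ?_ ?_ i).2
      (isExact_congr (fun S => ?_) h)
    · intro a b
      simp [sumNumbering]
    · refine fun S hS => ⟨S.toLeft, ?_⟩
      ext (a | G)
      · simp
      · simpa using fun hG => by simpa using (hS.right G hG).1
    · have hS : (S.map (Function.Embedding.inl : V ↪ V ⊕ Finset V)).toLeft = S := by
        ext; simp
      constructor
      · rintro ⟨h1, h2⟩
        refine ⟨fun a ha => ⟨Finset.mem_univ a, Finset.disjoint_left.1 h1 (by simpa using ha)⟩,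
          fun G hG => ?_, fun G H hG => ?_, by rwa [hS], fun a G _ hG => ?_⟩ <;> simp at hG
      · intro hM
        refine ⟨Finset.disjoint_left.2 fun a ha => (hM.left a (by simpa using ha)).2, ?_⟩
        simpa only [hS] using hM.union_mem
  | insert G Q hGQ hmin ih =>
    refine isExact_of_deletion hg (fun _ _ => IsMixedFace.mono) (inr G)
      (isExact_congr (fun S => isMixedFace_erase_right.symm) ?_) fun l _ => ?_
    · rw [Finset.erase_insert hGQ]
      exact ih fun H hH => hQ H (Finset.mem_insert_of_mem hH)
    obtain ⟨a, haG, haF⟩ := Finset.exists_mem_notMem_of_card_lt_card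
      (hQ G (Finset.mem_insert_self _ _))
    refine isExact_of_cone hg (inl a) (fun S hS => ⟨by simpa using hS.1, ?_⟩) l
    obtain ⟨hGS, hS⟩ := hS
    rw [Finset.insert_comm]
    obtain ⟨-, hGK, hFG⟩ := hS.right G (Finset.mem_insert_self _ _)
    set T := insert (inr G) S with hT
    have hGT : inr G ∈ T := Finset.mem_insert_self _ _
    have hl : ∀ b, inl b ∈ insert (inl a) T → b = a ∨ inl b ∈ T := fun b hb => by simpa using hb
    have hr : ∀ H, inr H ∈ insert (inl a) T → inr H ∈ T := fun H hH => by simpa using hH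
    refine ⟨fun b hb => ⟨Finset.mem_univ b, ?_⟩, fun H hH => hS.right H (hr H hH),
      fun H H' hH hH' => hS.chain H H' (hr H hH) (hr H' hH'), ?_, fun b H hb hH => ?_⟩
    · rcases hl b hb with rfl | hb
      exacts [haF, (hS.left b hb).2]
    · refine K.down_closed hGK (Finset.union_subset (fun b hb => ?_) hFG)
      rcases hl b (Finset.mem_toLeft.1 hb) with rfl | hb
      exacts [haG, hS.mem_right b G hb hGT]
    · rcases hl b hb with rfl | hb
      · rcases hS.chain G H hGT (hr H hH) with h1 | h1
        · exact h1 haG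
        · rcases Finset.mem_insert.1 (hS.right H (hr H hH)).1 with rfl | h2
          · exact haG
          · exact Finset.eq_of_subset_of_card_le h1 (hmin H h2) ▸ haG
      · exact hS.mem_right b H hb (hr H hH)

lemma isExact_mixed [Fintype V] {e : V → ℕ} {f : Finset V → ℕ} (he : Function.Injective e)
    (hf : Function.Injective f) {i j : ℕ}
    (hlk : ∀ F ∈ K.faces, F.card ≤ j → IsExact e (1 : V → k) k (K.IsLinkFace F) i)
    (hQ : ∀ G, G ∈ Q ↔ j < G.card) (hF : F ∈ K.faces) (s : Finset V) :
    IsExact (sumNumbering e f) (1 : V ⊕ Finset V → k) k (K.IsMixedFace Q sᶜ F) i := by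
  have hg := sumNumbering_injective he hf
  induction s using Finset.induction_on generalizing F with
  | empty =>
    rw [Finset.compl_empty]
    rcases le_or_gt F.card j with hj | hj
    · exact isExact_mixed_univ he hf (hlk F hF hj) fun G hG => hj.trans_lt ((hQ G).1 hG)
    · exact isExact_mixed_of_mem hg
        (fun G _ hFG => (hQ G).2 (hj.trans_le (Finset.card_le_card hFG))) hF i
  | insert v s hv ih =>
    rw [Finset.compl_insert]
    exact isExact_congr (fun S => isMixedFace_erase_left) (isExact_deletion hg
      (fun _ _ => IsMixedFace.mono) (inl v) (ih hF)
      (isExact_mixed_link hg (Finset.mem_compl.2 hv) fun hvF => ih hvF))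

lemma mem_trunc {j : ℕ} {C : Finset (Finset V)} : C ∈ (K.trunc j).faces ↔
    (∀ G ∈ C, G ∈ K.faces ∧ j < G.card) ∧ ∀ G ∈ C, ∀ H ∈ C, G ⊆ H ∨ H ⊆ G := by
  simp only [trunc, Finset.mem_filter, Finset.mem_powerset, Finset.subset_iff]
  exact ⟨fun h => ⟨fun G hG => ⟨h.1 hG, h.2.1 G hG⟩, h.2.2⟩,
    fun h => ⟨fun G hG => (h.1 G hG).1, fun G hG => (h.1 G hG).2, h.2⟩⟩

lemma isExact_trunc [Fintype V] {e : V → ℕ} {f : Finset V → ℕ} (he : Function.Injective e)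
    (hf : Function.Injective f) {i j : ℕ} (h0 : ∅ ∈ K.faces)
    (hlk : ∀ F ∈ K.faces, F.card ≤ j → IsExact e (1 : V → k) k (K.IsLinkFace F) i) :
    IsExact f (1 : Finset V → k) k (fun C => C ∈ (K.trunc j).faces) i := by
  have key := isExact_mixed he hf hlk (Q := Finset.univ.filter fun G => j < G.card)
    (fun G => by simp) h0 Finset.univ
  rw [Finset.compl_univ, isExact_map_iff (e := f) Function.Embedding.inr] at key
  · refine isExact_congr (fun C => ?_) key
    rw [mem_trunc]
    constructor
    · intro h
      exact ⟨fun G hG => by simpa [and_comm] using h.right G (by simpa using hG),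
        fun G hG H hH => h.chain G H (by simpa using hG) (by simpa using hH)⟩
    · intro h
      refine ⟨fun a ha => by simp at ha, fun G hG => ?_, fun G H hG hH => ?_, ?_,
        fun a G ha => by simp at ha⟩
      · simpa [and_comm] using h.1 G (by simpa using hG)
      · exact h.2 G (by simpa using hG) H (by simpa using hH)
      · refine K.down_closed h0 fun a ha => ?_
        simp at ha
  · intro a b
    simp [sumNumbering]
  · refine fun S hS => ⟨S.toRight, ?_⟩
    ext (a | G)
    · simpa using fun ha => by simpa using (hS.left a ha).1
    · simp

theorem SerreS.hVanish_trunc [Fintype V] {ℓ : ℕ} (h : SerreS k ℓ K) {i j : ℕ}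
    (hij : i + j < K.rank) (hiℓ : i < ℓ) : HVanish k (K.trunc j) i := by
  obtain ⟨G, hG, hcard⟩ := exists_card_eq_rank (K := K) (by omega)
  refine hVanish_of_isExact k _ i ?_
  rcases Nat.eq_zero_or_pos i with rfl | h0
  · refine isExact_zero G (mem_trunc.2 ⟨fun H hH => ?_, ?_⟩)
    · obtain rfl := Finset.mem_singleton.1 hH
      exact ⟨hG, by omega⟩
    · simp
  · exact isExact_trunc (numbering_injective V) (numbering_injective (Finset V))
      (K.down_closed hG (Finset.empty_subset _)) fun F hF hj =>
        h.isExact_link_of_lt_rank (numbering_injective V) hF h0 hiℓ (by omega)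

end MixedComplex

end SComplex

/-- If `k[O(P)]` satisfies `(S_ℓ)` then `H̃_{i-1}(O(P_{>j}); k) = 0` whenever
`i + j < d` and `0 ≤ i < ℓ` (where `d = dim k[O(P)]`); in particular, if a simplicial complex
`Δ` satisfies `(S_ℓ)` then `H̃_{i-1}([Δ]_{>j}; k) = 0` whenever `i + j < d` and `0 ≤ i < ℓ`. -/
theorem serre_vanishing_of_truncations (k : Type) [Field k] :
    (∀ (P : Type) [DecidableEq P] [Fintype P] [PartialOrder P]
        [∀ a b : P, Decidable (a ≤ b)] (ℓ : ℕ),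
      SComplex.SerreS k ℓ (orderComplex P) →
        ∀ i j : ℕ, i + j < (orderComplex P).rank → i < ℓ →
          SComplex.HVanish k (ocAbove P j) i)
    ∧ (∀ (V : Type) [DecidableEq V] [Fintype V] (K : SComplex V) (ℓ : ℕ),
      SComplex.SerreS k ℓ K →
        ∀ i j : ℕ, i + j < K.rank → i < ℓ →
          SComplex.HVanish k (K.trunc j) i) := by
  refine ⟨?_, ?_⟩
  · intro P _ _ _ _ ℓ h i j hij hiℓ
    exact h.hVanish_ocAbove hij hiℓ
  · intro V _ _ K ℓ h i j hij hiℓ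
    exact h.hVanish_trunc hij hiℓ
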